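/- arXiv:1709.08150 — 5 statements merged into one kernel-verified Lean document; each statement's English description precedes it below -/
import Mathlib

section
/- Let F be a finite field with q = |F| elements. Then the sum of the auxiliary matrices over F satisfies Σ_{α∈F} C_α = q·I_{q²} + (J_q − I_q) ⊗ J_q, and the sum over the extended index set F ∪ {y} satisfies Σ_{a∈F∪{y}} C_a = q·I_{q²} + J_{q²}. -/
open Matrix Kronecker BigOperators

noncomputable section

/-- The all-ones matrix. -/
def allOnes (n : Type*) : Matrix n n ℝ := Matrix.of fun _ _ => 1

/-- The auxiliary matrices `C_a` for `a ∈ F ∪ {y}` (formally `Option F`, with `none`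
playing the role of the extra symbol `y`, so that `C_y = I_q ⊗ J_q`). -/
def auxC {F : Type*} [Field F] [Fintype F] [DecidableEq F] :
    Option F → Matrix (F × F) (F × F) ℝ
  | some α => Matrix.of fun p r => if r.2 - p.2 = α * (r.1 - p.1) then 1 else 0
  | none => Matrix.of fun p r => if p.1 = r.1 then 1 else 0

/-! Entrywise, `Σ_{α∈F} C_α` counts the slopes `α` of the lines joining `(a, u)` to `(b, v)`: there
is exactly one if `a ≠ b`, none if `a = b` and `u ≠ v`, and all `q` occur if the points coincide.
Since `C_y = I ⊗ J`, adding it replaces the summand `(J - I) ⊗ J` by `J ⊗ J = J`. -/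

theorem allOnes_kronecker_allOnes (m n : Type*) :
    allOnes m ⊗ₖ allOnes n = allOnes (m × n) := by
  ext
  simp [allOnes]

theorem card_filter_eq_mul_of_isUnit {M : Type*} [Monoid M] [Fintype M] [DecidableEq M]
    {c : M} (hc : IsUnit c) (d : M) : ({x | d = x * c} : Finset M).card = 1 := by
  obtain ⟨u, rfl⟩ := hc
  simp only [← Units.mul_inv_eq_iff_eq_mul, Finset.filter_eq, Finset.mem_univ, if_true,
    Finset.card_singleton]

section AuxC

variable {F : Type*} [Field F] [Fintype F] [DecidableEq F]

theorem auxC_none : auxC (none : Option F) = 1 ⊗ₖ allOnes F := by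
  ext
  simp [auxC, allOnes, one_apply]

theorem sum_auxC_some_apply_eq_card (p r : F × F) :
    (∑ α : F, auxC (some α)) p r =
      (({α | r.2 - p.2 = α * (r.1 - p.1)} : Finset F).card : ℝ) := by
  simp only [Matrix.sum_apply, auxC, of_apply, Finset.sum_boole]

theorem sum_auxC_some_apply_of_fst_ne {p r : F × F} (h : p.1 ≠ r.1) :
    (∑ α : F, auxC (some α)) p r = 1 := by
  have hunit : IsUnit (r.1 - p.1) := (sub_ne_zero.mpr h.symm).isUnit
  rw [sum_auxC_some_apply_eq_card, card_filter_eq_mul_of_isUnit hunit, Nat.cast_one]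

theorem sum_auxC_some_apply_of_fst_eq (a u v : F) :
    (∑ α : F, auxC (some α)) (a, u) (a, v) = if u = v then (Fintype.card F : ℝ) else 0 := by
  rw [sum_auxC_some_apply_eq_card]
  by_cases huv : u = v
  · simp [huv]
  · simp [huv, sub_eq_zero, Ne.symm huv]

theorem sum_auxC_some :
    ∑ α : F, auxC (some α) =
      (Fintype.card F : ℝ) • (1 : Matrix (F × F) (F × F) ℝ) +
        (allOnes F - 1) ⊗ₖ allOnes F := by
  ext ⟨a, u⟩ ⟨b, v⟩
  by_cases hab : a = b
  · subst b
    rw [sum_auxC_some_apply_of_fst_eq]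
    simp [allOnes, one_apply]
  · rw [sum_auxC_some_apply_of_fst_ne hab]
    simp [allOnes, one_apply, hab]

end AuxC

/-- `Σ_{α∈F} C_α = q·I_{q²} + (J_q − I_q) ⊗ J_q` and
    `Σ_{a∈F∪{y}} C_a = q·I_{q²} + J_{q²}`. -/
theorem sum_auxC (F : Type*) [Field F] [Fintype F] [DecidableEq F] :
    (∑ α : F, auxC (some α)) =
      (Fintype.card F : ℝ) • (1 : Matrix (F × F) (F × F) ℝ) +
        (allOnes F - 1) ⊗ₖ allOnes F ∧
    (∑ a : Option F, auxC a) =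
      (Fintype.card F : ℝ) • (1 : Matrix (F × F) (F × F) ℝ) + allOnes (F × F) := by
  refine ⟨sum_auxC_some, ?_⟩
  calc ∑ a : Option F, auxC a
    _ = 1 ⊗ₖ allOnes F + ((Fintype.card F : ℝ) • (1 : Matrix (F × F) (F × F) ℝ) +
          (allOnes F - 1) ⊗ₖ allOnes F) := by
      rw [Fintype.sum_option, auxC_none, sum_auxC_some]
    _ = (Fintype.card F : ℝ) • (1 : Matrix (F × F) (F × F) ℝ) +
          (1 + (allOnes F - 1)) ⊗ₖ allOnes F := by
      rw [add_kronecker, add_left_comm]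
    _ = (Fintype.card F : ℝ) • (1 : Matrix (F × F) (F × F) ℝ) + allOnes (F × F) := by
      rw [add_sub_cancel, allOnes_kronecker_allOnes]
end
end

section
/- Let F be a finite field with q = |F| elements. For any two distinct indices a, a' ∈ F ∪ {y}, the auxiliary matrices satisfy C_a · C_{a'} = J_{q²}, the all-ones matrix of order q². -/
/-!
The entry of `auxC a` at `(p, r)` records whether `p` and `r` lie on a common line of direction `a`
in the affine plane over `F`. Hence the entry of `auxC a * auxC a'` at `(p, r)` counts the common
points of the line of direction `a` through `p` and the line of direction `a'` through `r`, and two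
lines of distinct directions meet in exactly one point.
-/

open Matrix Kronecker BigOperators

noncomputable section

section FiberMatrix

variable {X Y Z : Type*} (R : Type*) [DecidableEq Y] [DecidableEq Z]

/-- The `0`-`1` matrix of the equivalence relation "`p` and `r` lie in the same fiber of `f`".
The matrices `auxC a` are of this form, the fibers being the lines of a parallel class. -/
def fiberMatrix [Zero R] [One R] (f : X → Y) : Matrix X X R :=
  Matrix.of fun p r => if f p = f r then 1 else 0

theorem fiberMatrix_mul_of_bijective [Fintype X] [NonAssocSemiring R] {f : X → Y} {g : X → Z}
    (hfg : Function.Bijective fun x => (f x, g x)) :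
    fiberMatrix R f * fiberMatrix R g = Matrix.of fun _ _ => 1 := by
  classical
  ext p r
  obtain ⟨x₀, hx₀, hunique⟩ := hfg.existsUnique (f p, g r)
  have hmem (x : X) : f p = f x ∧ g x = g r ↔ x = x₀ := by
    constructor
    · rintro ⟨hf, hg⟩
      exact hunique x (Prod.ext hf.symm hg)
    · rintro rfl
      exact ⟨(congrArg Prod.fst hx₀).symm, congrArg Prod.snd hx₀⟩
  calc (fiberMatrix R f * fiberMatrix R g) p r
      = ∑ x, if f p = f x ∧ g x = g r then 1 else 0 := by
        simp only [fiberMatrix, Matrix.mul_apply, Matrix.of_apply, ite_zero_mul_ite_zero, one_mul]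
    _ = 1 := by simp only [hmem, Finset.sum_ite_eq', Finset.mem_univ, if_true]

end FiberMatrix

section DirectionForm

variable {K : Type*} [Field K]

/-- The linear form on the affine plane `K × K` whose level sets are the lines of direction `a`:
the lines of slope `α` for `a = some α`, the vertical lines for `a = none`.
It is the form that exhibits `auxC a` as a fiber matrix. -/
def directionForm : Option K → (K × K →ₗ[K] K)
  | some α => LinearMap.snd K K K - α • LinearMap.fst K K K
  | none => LinearMap.fst K K K

@[simp]
theorem directionForm_none (p : K × K) : directionForm none p = p.1 := rfl

@[simp]
theorem directionForm_some (α : K) (p : K × K) : directionForm (some α) p = p.2 - α * p.1 := rfl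

theorem eq_zero_of_directionForm_eq_zero {a a' : Option K} (h : a ≠ a') {p : K × K}
    (hp : directionForm a p = 0) (hp' : directionForm a' p = 0) : p = 0 := by
  obtain ⟨x, u⟩ := p
  rcases a with _ | α <;> rcases a' with _ | β <;>
    simp only [directionForm_none, directionForm_some] at hp hp'
  · exact absurd rfl h
  · simp_all
  · simp_all
  · have hαβ : α - β ≠ 0 := sub_ne_zero.mpr fun e => h (congrArg some e)
    have hx : x = 0 := (mul_eq_zero_iff_left hαβ).mp (by linear_combination hp' - hp)
    simp_all

theorem directionForm_prod_bijective {a a' : Option K} (h : a ≠ a') :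
    Function.Bijective ((directionForm a).prod (directionForm a')) := by
  have hinj : Function.Injective ((directionForm a).prod (directionForm a')) :=
    (injective_iff_map_eq_zero _).mpr fun _ hp =>
      eq_zero_of_directionForm_eq_zero h (congrArg Prod.fst hp) (congrArg Prod.snd hp)
  exact ⟨hinj, LinearMap.surjective_of_injective hinj⟩

end DirectionForm

theorem auxC_eq_fiberMatrix {F : Type*} [Field F] [Fintype F] [DecidableEq F] (a : Option F) :
    auxC a = fiberMatrix ℝ (directionForm a) := by
  ext p r
  cases a with
  | none => rfl
  | some α =>
    have hline : r.2 - p.2 = α * (r.1 - p.1) ↔ p.2 - α * p.1 = r.2 - α * r.1 := by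
      constructor <;> intro h <;> linear_combination -h
    exact if_congr hline rfl rfl

/-- For distinct `a, a' ∈ F ∪ {y}`, `C_a · C_{a'} = J_{q²}`. -/
theorem auxC_mul_ne (F : Type*) [Field F] [Fintype F] [DecidableEq F]
    (a a' : Option F) (h : a ≠ a') :
    auxC a * auxC a' = allOnes (F × F) := by
  rw [auxC_eq_fiberMatrix, auxC_eq_fiberMatrix]
  exact fiberMatrix_mul_of_bijective ℝ (directionForm_prod_bijective h)
end
end

section
/- Let K be a finite field with r = |K| elements. For all nonzero β, β' ∈ K: if β + β' = 0 then Σ_{γ∈K} P_{β·β', (β+β')·γ} = r·I_r, and if β + β' ≠ 0 then Σ_{γ∈K} P_{β·β', (β+β')·γ} = J_r, where I_r and J_r denote the identity and all-ones matrices with rows and columns indexed by K. -/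
open Matrix BigOperators

noncomputable section

/-- The permutation matrix `P_{β,γ}` with `(a,b)`-entry `1` iff `β·(−a+b) = γ`. -/
def permP {K : Type*} [Field K] [DecidableEq K] (β γ : K) : Matrix K K ℝ :=
  Matrix.of fun a b => if β * (-a + b) = γ then 1 else 0

section

variable {K : Type*} [Field K] [DecidableEq K]

theorem permP_zero_right {β : K} (hβ : β ≠ 0) : permP β 0 = 1 := by
  ext a b
  simp [permP, one_apply, hβ, neg_add_eq_zero]

theorem sum_permP [Fintype K] (β : K) : ∑ γ : K, permP β γ = allOnes K := by
  ext a b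
  simp [permP, allOnes, Matrix.sum_apply]

theorem sum_permP_mul_left [Fintype K] (β : K) {c : K} (hc : c ≠ 0) :
    ∑ γ : K, permP β (c * γ) = allOnes K :=
  calc
    ∑ γ : K, permP β (c * γ) = ∑ γ : K, permP β γ :=
      Equiv.sum_comp (Equiv.mulLeft₀ c hc) (permP β)
    _ = allOnes K := sum_permP β

end

/-- For nonzero `β, β'`:
`Σ_{γ∈K} P_{β·β', (β+β')·γ}` equals `r·I_r` if `β + β' = 0` and `J_r` otherwise. -/
theorem permP_sum (K : Type*) [Field K] [Fintype K] [DecidableEq K]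
    (β β' : K) (hβ : β ≠ 0) (hβ' : β' ≠ 0) :
    (β + β' = 0 →
      (∑ γ : K, permP (β * β') ((β + β') * γ)) =
        (Fintype.card K : ℝ) • (1 : Matrix K K ℝ)) ∧
    (β + β' ≠ 0 →
      (∑ γ : K, permP (β * β') ((β + β') * γ)) = allOnes K) := by
  refine ⟨fun hsum => ?_, sum_permP_mul_left (β * β')⟩
  calc
    ∑ γ : K, permP (β * β') ((β + β') * γ) = ∑ _γ : K, (1 : Matrix K K ℝ) := by
      simp only [hsum, zero_mul, permP_zero_right (mul_ne_zero hβ hβ')]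
    _ = (Fintype.card K : ℝ) • (1 : Matrix K K ℝ) := by
      rw [Finset.sum_const, Finset.card_univ, Nat.cast_smul_eq_nsmul]
end
end

section
/- In the twin prime power construction, for every nonzero β ∈ K the matrix N_β satisfies N_β^⊤ = N_{−β} (equivalently, the transpose of each block Latin square L_β equals L_{−β} and each auxiliary matrix is symmetric). -/
open Matrix Kronecker BigOperators

noncomputable section

/-- The matrix `N_β = Σ_{γ∈K∖{0}} P_{β,γ} ⊗ C_{ψ(γ)}` of the twin prime power
construction, where `ψ : K∖{0} → F ∪ {y}` is a fixed bijection. -/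
def NN {F K : Type*} [Field F] [Fintype F] [DecidableEq F]
    [Field K] [Fintype K] [DecidableEq K]
    (ψ : {x : K // x ≠ 0} ≃ Option F) (β : K) :
    Matrix (K × (F × F)) (K × (F × F)) ℝ :=
  ∑ γ : {x : K // x ≠ 0}, permP β (γ : K) ⊗ₖ auxC (ψ γ)

theorem transpose_permP {K : Type*} [Field K] [DecidableEq K] (β γ : K) :
    (permP β γ)ᵀ = permP (-β) γ := by
  ext a b
  have neg_mul_difference : β * (-b + a) = -β * (-a + b) := by ring
  simp only [permP, transpose_apply, of_apply, neg_mul_difference]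

section

variable {F : Type*} [Field F] [Fintype F] [DecidableEq F]

theorem isSymm_auxC (a : Option F) : (auxC a).IsSymm := by
  ext p r
  cases a with
  | none => simp only [auxC, transpose_apply, of_apply, eq_comm]
  | some α =>
    have collinear_comm :
        p.2 - r.2 = α * (p.1 - r.1) ↔ r.2 - p.2 = α * (r.1 - p.1) := by
      rw [← neg_inj, ← mul_neg, neg_sub, neg_sub]
    simp only [auxC, transpose_apply, of_apply, collinear_comm]

theorem NN_transpose_general {K ι : Type*} [Field K] [DecidableEq K]
    (s : Finset ι) (γ : ι → K) (ψ : ι → Option F) (β : K) :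
    (∑ i ∈ s, permP β (γ i) ⊗ₖ auxC (ψ i))ᵀ =
      ∑ i ∈ s, permP (-β) (γ i) ⊗ₖ auxC (ψ i) := by
  rw [transpose_sum]
  refine Finset.sum_congr rfl fun i _ => ?_
  rw [← kroneckerMap_transpose, transpose_permP, (isSymm_auxC _).eq]

end

/-- In the twin prime power construction, `N_βᵀ = N_{−β}` for every nonzero `β`. -/
theorem NN_transpose {F K : Type*} [Field F] [Fintype F] [DecidableEq F]
    [Field K] [Fintype K] [DecidableEq K]
    (hcard : Fintype.card K = Fintype.card F + 2)
    (ψ : {x : K // x ≠ 0} ≃ Option F) (β : K) (hβ : β ≠ 0) :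
    (NN ψ β)ᵀ = NN ψ (-β) := by
  exact NN_transpose_general Finset.univ Subtype.val ψ β
end
end

section
/- In the twin prime power construction, the matrices N_β pairwise commute: for all nonzero β, β' ∈ K, N_β · N_{β'} = N_{β'} · N_β. -/
/-!
Every `P_{β,γ}` depends only on differences in the additive group of `K`, and every `C_a` only on
differences in `F × F`. Each of these families therefore consists of circulant matrices over one
abelian group and commutes. The mixed-product rule turns this into commutation of the blocks
`P_{β,γ} ⊗ C_a`, and sums of commuting blocks commute.
-/

open Matrix Kronecker BigOperators

noncomputable section

theorem commute_kronecker {R m n : Type*} [CommSemiring R] [Fintype m] [Fintype n]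
    {A A' : Matrix m m R} {B B' : Matrix n n R} (hA : Commute A A') (hB : Commute B B') :
    Commute (A ⊗ₖ B) (A' ⊗ₖ B') := by
  rw [commute_iff_eq, ← mul_kronecker_mul, ← mul_kronecker_mul, hA.eq, hB.eq]

section PermP

variable {K : Type*} [Field K] [DecidableEq K]

theorem permP_eq_circulant (β γ : K) :
    permP β γ = circulant fun d => if β * d = -γ then 1 else 0 := by
  ext a b
  have h : β * (-a + b) = -(β * (a - b)) := by ring
  simp only [permP, of_apply, circulant_apply, h, neg_eq_iff_eq_neg]

theorem commute_permP [Fintype K] (β β' γ γ' : K) : Commute (permP β γ) (permP β' γ') := by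
  rw [permP_eq_circulant, permP_eq_circulant]
  exact circulant_mul_comm _ _

end PermP

section AuxC

variable {F : Type*} [Field F] [Fintype F] [DecidableEq F]

theorem auxC_some_eq_circulant (α : F) :
    auxC (some α) = circulant fun d => if d.2 = α * d.1 then 1 else 0 := by
  ext p r
  have h : r.2 - p.2 = α * (r.1 - p.1) ↔ p.2 - r.2 = α * (p.1 - r.1) := by
    rw [← neg_inj, ← mul_neg, neg_sub, neg_sub]
  simp only [auxC, of_apply, circulant_apply, Prod.fst_sub, Prod.snd_sub, h]

theorem auxC_none_eq_circulant :
    auxC (none : Option F) = circulant fun d => if d.1 = 0 then 1 else 0 := by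
  ext p r
  simp only [auxC, of_apply, circulant_apply, Prod.fst_sub, sub_eq_zero]

theorem exists_auxC_eq_circulant (a : Option F) : ∃ v : F × F → ℝ, auxC a = circulant v := by
  cases a with
  | none => exact ⟨_, auxC_none_eq_circulant⟩
  | some α => exact ⟨_, auxC_some_eq_circulant α⟩

theorem commute_auxC (a b : Option F) : Commute (auxC a) (auxC b) := by
  obtain ⟨v, hv⟩ := exists_auxC_eq_circulant a
  obtain ⟨w, hw⟩ := exists_auxC_eq_circulant b
  rw [hv, hw]
  exact circulant_mul_comm v w

end AuxC

theorem NN_commute_general {F K : Type*} [Field F] [Fintype F] [DecidableEq F]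
    [Field K] [Fintype K] [DecidableEq K]
    (ψ ψ' : {x : K // x ≠ 0} → Option F) (β β' : K) :
    Commute (∑ γ : {x : K // x ≠ 0}, permP β (γ : K) ⊗ₖ auxC (ψ γ))
      (∑ γ : {x : K // x ≠ 0}, permP β' (γ : K) ⊗ₖ auxC (ψ' γ)) :=
  Commute.sum_left _ _ _ fun _ _ => Commute.sum_right _ _ _ fun _ _ =>
    commute_kronecker (commute_permP _ _ _ _) (commute_auxC _ _)

/-- In the twin prime power construction, the matrices `N_β` pairwise commute. -/
theorem NN_commute {F K : Type*} [Field F] [Fintype F] [DecidableEq F]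
    [Field K] [Fintype K] [DecidableEq K]
    (hcard : Fintype.card K = Fintype.card F + 2)
    (ψ : {x : K // x ≠ 0} ≃ Option F) (β β' : K) (hβ : β ≠ 0) (hβ' : β' ≠ 0) :
    NN ψ β * NN ψ β' = NN ψ β' * NN ψ β :=
  NN_commute_general ψ ψ β β'
end
end
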